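/- Let 𝔤 be the real Lie algebra with basis D, X^0,…,X^n, P_0,…,P_n, Z, V_1,…,V_n, X_e = P_0, X_f, X_h, subject to the bracket relations: [P_i, X^j] = -2δ_i^j Z, [X^i, D] = X^i/2, [P_i, D] = P_i/2, [Z, D] = Z, [X_e, X_f] = -X_h, [X_h, X_e] = -2X_e, [X_h, X_f] = 2X_f, [P_0, V_a] = P_a, [V_a, P_b] = k_{abc} X^c, [V_a, X^b] = δ_a^b X^0, [X_h, V_a] = V_a, [X_f, P_a] = V_a, [D, X_f] = X_f/2, [Z, X_f] = X^0/2, [P_a, X_h] = P_a, [X_h, X^0] = X^0, [Z, X_h] = Z, and all other brackets among basis elements zero (where k_{abc} are the symmetric coefficients of a cubic form). Then these brackets satisfy the Jacobi identity, so 𝔤 is a Lie algebra of dimension 3n+6. -/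

import Mathlib

open Finset

/-- basis of the universal algebra of Killing fields of a tree-level q-map space:
`D`, `X^i`, `P_i` (`i = 0,…,n`, with `X_e = P 0`), `Z`, `V_a` (`a = 1,…,n`),
`F = X_f`, `H = X_h`. -/
inductive QBasis (n : ℕ) : Type
  | D : QBasis n
  | X : Fin (n+1) → QBasis n
  | P : Fin (n+1) → QBasis n
  | Z : QBasis n
  | V : Fin n → QBasis n
  | F : QBasis n
  | H : QBasis n
  deriving DecidableEq, Fintype

noncomputable section

/-- basis vector (delta function). -/
def δb {n : ℕ} (b : QBasis n) : QBasis n → ℝ := fun e => if e = b then 1 else 0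

/-- the structure constants: the bracket of two basis vectors, as listed in the
paper (all unlisted brackets are zero, and the listed ones are extended
antisymmetrically). -/
def qBra {n : ℕ} (k : Fin n → Fin n → Fin n → ℝ) :
    QBasis n → QBasis n → (QBasis n → ℝ)
  | .P i, .X j => if i = j then (-2 : ℝ) • δb (.Z) else 0
  | .X j, .P i => if i = j then (2 : ℝ) • δb (.Z) else 0
  | .X i, .D => (1/2 : ℝ) • δb (.X i)
  | .D, .X i => (-(1/2) : ℝ) • δb (.X i)
  | .P i, .D => (1/2 : ℝ) • δb (.P i)
  | .D, .P i => (-(1/2) : ℝ) • δb (.P i)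
  | .Z, .D => δb (.Z)
  | .D, .Z => -δb (.Z)
  | .P i, .F => Fin.cases (motive := fun _ => QBasis n → ℝ)
      (-δb (.H)) (fun a => -δb (.V a)) i
  | .F, .P i => Fin.cases (motive := fun _ => QBasis n → ℝ)
      (δb (.H)) (fun a => δb (.V a)) i
  | .H, .P i => (if i = 0 then (-2 : ℝ) else (-1 : ℝ)) • δb (.P i)
  | .P i, .H => (if i = 0 then (2 : ℝ) else (1 : ℝ)) • δb (.P i)
  | .H, .F => (2 : ℝ) • δb (.F)
  | .F, .H => (-2 : ℝ) • δb (.F)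
  | .P i, .V a => Fin.cases (motive := fun _ => QBasis n → ℝ)
      (δb (.P a.succ)) (fun b => -∑ c, k a b c • δb (.X c.succ)) i
  | .V a, .P i => Fin.cases (motive := fun _ => QBasis n → ℝ)
      (-δb (.P a.succ)) (fun b => ∑ c, k a b c • δb (.X c.succ)) i
  | .V a, .X i => Fin.cases (motive := fun _ => QBasis n → ℝ)
      0 (fun b => if a = b then δb (.X 0) else 0) i
  | .X i, .V a => Fin.cases (motive := fun _ => QBasis n → ℝ)
      0 (fun b => if a = b then -δb (.X 0) else 0) i
  | .H, .V a => δb (.V a)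
  | .V a, .H => -δb (.V a)
  | .D, .F => (1/2 : ℝ) • δb (.F)
  | .F, .D => (-(1/2) : ℝ) • δb (.F)
  | .Z, .F => (1/2 : ℝ) • δb (.X 0)
  | .F, .Z => (-(1/2) : ℝ) • δb (.X 0)
  | .H, .X i => if i = 0 then δb (.X 0) else 0
  | .X i, .H => if i = 0 then -δb (.X 0) else 0
  | .Z, .H => δb (.Z)
  | .H, .Z => -δb (.Z)
  | _, _ => 0

/-- the bilinear extension of the structure constants to the whole
`(3n+6)`-dimensional space. -/
def qBracket {n : ℕ} (k : Fin n → Fin n → Fin n → ℝ)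
    (x y : QBasis n → ℝ) : QBasis n → ℝ :=
  fun e => ∑ b : QBasis n, ∑ b' : QBasis n, x b * y b' * qBra k b b' e

/-!
Call an element `x` of a skew-symmetric algebra *Leibniz* if `ad x` is a derivation; the Jacobi
identity says that every element is Leibniz. The Leibniz elements form a subalgebra, so few brackets
need inspection. `D` and `H` are Leibniz because they act diagonally and the brackets respect the
two resulting gradings. Testing `F`, then `P_0`, then `V_a` as derivations, on pairs of basis
vectors not yet known to be Leibniz, the coefficients `k` have to match only on the pairs
`(P_a, P_b)` for `F`, `(V_a, V_b)` for `P_0`, and `(P_b, P_c)`, `(V_b, P_c)` for `V_a`, where they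
do by symmetry. Then `P_a = [P_0, V_a]` is Leibniz, and only the commuting vectors `X^i` and `Z`
remain.
-/

section Leibniz

variable {R M ι : Type*} [CommRing R] [AddCommGroup M] [Module R M] (B : M →ₗ[R] M →ₗ[R] M)

/-- The elements `x` of a nonassociative algebra with product `B` for which left multiplication
`B x` is a derivation. When `B` is skew-symmetric, these are the `x` such that the Jacobi identity
holds for all triples containing `x`. -/
def leibnizSubmodule : Submodule R M where
  carrier := {x | ∀ y z, B x (B y z) = B (B x y) z + B y (B x z)}
  zero_mem' := by simp
  add_mem' {x x'} hx hx' y z := by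
    simp only [map_add, LinearMap.add_apply, hx y z, hx' y z]
    abel
  smul_mem' c x hx y z := by
    simp only [map_smul, LinearMap.smul_apply, hx y z, smul_add]

variable {B} {e : ι → M}

theorem skew_of_span_eq_top (he : Submodule.span R (Set.range e) = ⊤)
    (h : ∀ i j, B (e i) (e j) = -B (e j) (e i)) (x y : M) : B x y = -B y x := by
  have eq_neg_flip : B = -B.flip :=
    LinearMap.ext_on_range he fun i ↦ LinearMap.ext_on_range he fun j ↦ h i j
  exact LinearMap.congr_fun₂ eq_neg_flip x y

namespace leibnizSubmodule

theorem apply_mem {x y : M} (hx : x ∈ leibnizSubmodule B) (hy : y ∈ leibnizSubmodule B) :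
    B x y ∈ leibnizSubmodule B := by
  have commutator (w : M) : B (B x y) w = B x (B y w) - B y (B x w) :=
    eq_sub_of_add_eq (hx y w).symm
  have second_order {x y : M} (hx : x ∈ leibnizSubmodule B) (hy : y ∈ leibnizSubmodule B)
      (z w : M) : B x (B y (B z w)) =
        B (B x (B y z)) w + B (B y z) (B x w) + (B (B x z) (B y w) + B z (B x (B y w))) := by
    rw [hy z w, map_add, hx (B y z), hx z (B y w)]
  intro z w
  rw [commutator, commutator, commutator, second_order hx hy, second_order hy hx, map_sub, map_sub,
    LinearMap.sub_apply]
  abel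

theorem mem_of_span_eq_top (he : Submodule.span R (Set.range e) = ⊤) {x : M}
    (h : ∀ i j, B x (B (e i) (e j)) = B (B x (e i)) (e j) + B (e i) (B x (e j))) :
    x ∈ leibnizSubmodule B := by
  have leibniz_rule : B.compr₂ (B x) = B ∘ₗ B x + B.compl₂ (B x) :=
    LinearMap.ext_on_range he fun i ↦ LinearMap.ext_on_range he fun j ↦ h i j
  exact fun y z ↦ LinearMap.congr_fun₂ leibniz_rule y z

theorem mem_of_grading (he : Submodule.span R (Set.range e) = ⊤) {x : M} {w : ι → R}
    (hw : ∀ i, B x (e i) = w i • e i)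
    (hB : ∀ i j, B x (B (e i) (e j)) = (w i + w j) • B (e i) (e j)) :
    x ∈ leibnizSubmodule B :=
  mem_of_span_eq_top he fun i j ↦ by
    rw [hB, hw, hw, map_smul, map_smul, LinearMap.smul_apply, add_smul]

theorem mem_of_span_eq_top_of_skew (he : Submodule.span R (Set.range e) = ⊤)
    (skew : ∀ x y, B x y = -B y x) {x : M}
    (h : ∀ i j, e i ∈ leibnizSubmodule B ∨ e j ∈ leibnizSubmodule B ∨
      B x (B (e i) (e j)) = B (B x (e i)) (e j) + B (e i) (B x (e j))) :
    x ∈ leibnizSubmodule B := by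
  refine mem_of_span_eq_top he fun i j ↦ ?_
  obtain hi | hj | hij := h i j
  · rw [hi x (e j), skew (e i) x]
    simp
  · rw [skew (e i) (e j), map_neg, skew (B x (e i)), hj x (e i), skew (B (e j) x), skew x (e j)]
    simp
  · exact hij

theorem jacobi (skew : ∀ x y, B x y = -B y x) {x : M} (hx : x ∈ leibnizSubmodule B) (y z : M) :
    B x (B y z) + B y (B z x) + B z (B x y) = 0 := by
  rw [hx y z, skew z x, skew z (B x y), map_neg]
  abel

end leibnizSubmodule

end Leibniz

section KillingAlgebra

variable {n : ℕ} (k : Fin n → Fin n → Fin n → ℝ)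

theorem δb_eq_single (b : QBasis n) : δb b = Pi.single b 1 := by
  ext e
  simp [δb, Pi.single_apply]

theorem span_range_δb : Submodule.span ℝ (Set.range (δb (n := n))) = ⊤ := by
  convert (Pi.basisFun ℝ (QBasis n)).span_eq
  ext b
  simp [δb_eq_single]

theorem card_qBasis (n : ℕ) : Fintype.card (QBasis n) = 3 * n + 6 := by
  -- `deriving Fintype` generates this equivalence with a sum of copies of `Unit` and `Fin`.
  rw [← Fintype.card_congr (QBasis.proxyTypeEquiv n)]
  simp
  ring

@[elab_as_elim]
theorem QBasis.cases_zero_succ {motive : QBasis n → Prop} (b : QBasis n) (D : motive .D)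
    (X_zero : motive (.X 0)) (X_succ : ∀ a : Fin n, motive (.X a.succ))
    (P_zero : motive (.P 0)) (P_succ : ∀ a : Fin n, motive (.P a.succ)) (Z : motive .Z)
    (V : ∀ a, motive (.V a)) (F : motive .F) (H : motive .H) : motive b := by
  cases b with
  | X i => exact Fin.cases X_zero X_succ i
  | P i => exact Fin.cases P_zero P_succ i
  | V a => exact V a
  | _ => assumption

theorem qBra_skew (b b' : QBasis n) : qBra k b b' = -qBra k b' b := by
  cases b using QBasis.cases_zero_succ <;> cases b' using QBasis.cases_zero_succ <;>
    simp [qBra, (Fin.succ_pos _).ne, eq_comm, neg_ite]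

/-- `qBracket k` as a bilinear map. -/
def qBracketₗ : (QBasis n → ℝ) →ₗ[ℝ] (QBasis n → ℝ) →ₗ[ℝ] (QBasis n → ℝ) :=
  Fintype.linearCombination ℝ fun b ↦ Fintype.linearCombination ℝ (qBra k b)

theorem qBracketₗ_apply (x y : QBasis n → ℝ) : qBracketₗ k x y = qBracket k x y := by
  ext e
  simp [qBracketₗ, qBracket, Fintype.linearCombination_apply, Finset.mul_sum, mul_assoc]

@[simp]
theorem qBracketₗ_δb (b b' : QBasis n) : qBracketₗ k (δb b) (δb b') = qBra k b b' := by
  simp [qBracketₗ, δb_eq_single]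

theorem qBracketₗ_skew (x y : QBasis n → ℝ) : qBracketₗ k x y = -qBracketₗ k y x :=
  skew_of_span_eq_top span_range_δb (by simpa only [qBracketₗ_δb] using qBra_skew k) x y

/-- The eigenvalues of `ad D` on the basis vectors. -/
def weightD : QBasis n → ℝ
  | .X _ | .P _ => -(1 / 2)
  | .Z => -1
  | .F => 1 / 2
  | .D | .V _ | .H => 0

/-- The eigenvalues of `ad H` on the basis vectors. -/
def weightH : QBasis n → ℝ
  | .X i => if i = 0 then 1 else 0
  | .P i => if i = 0 then -2 else -1
  | .Z => -1
  | .V _ => 1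
  | .F => 2
  | .D | .H => 0

theorem qBracketₗ_D_δb (b : QBasis n) : qBracketₗ k (δb .D) (δb b) = weightD b • δb b := by
  cases b <;> simp [qBra, weightD]

theorem qBracketₗ_H_δb (b : QBasis n) : qBracketₗ k (δb .H) (δb b) = weightH b • δb b := by
  cases b using QBasis.cases_zero_succ <;> simp [qBra, weightH]

theorem qBracketₗ_D_qBra (b b' : QBasis n) :
    qBracketₗ k (δb .D) (qBra k b b') = (weightD b + weightD b') • qBra k b b' := by
  cases b using QBasis.cases_zero_succ <;> cases b' using QBasis.cases_zero_succ <;>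
    simp [qBra, weightD, (Fin.succ_pos _).ne, apply_ite (qBracketₗ k _), Finset.smul_sum,
      smul_smul, mul_comm] <;>
    norm_num

theorem qBracketₗ_H_qBra (b b' : QBasis n) :
    qBracketₗ k (δb .H) (qBra k b b') = (weightH b + weightH b') • qBra k b b' := by
  cases b using QBasis.cases_zero_succ <;> cases b' using QBasis.cases_zero_succ <;>
    simp [qBra, weightH, (Fin.succ_pos _).ne, apply_ite (qBracketₗ k _), smul_smul] <;>
    norm_num

theorem D_mem_leibnizSubmodule : δb .D ∈ leibnizSubmodule (qBracketₗ k) :=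
  leibnizSubmodule.mem_of_grading span_range_δb (qBracketₗ_D_δb k)
    (by simpa only [qBracketₗ_δb] using qBracketₗ_D_qBra k)

theorem H_mem_leibnizSubmodule : δb .H ∈ leibnizSubmodule (qBracketₗ k) :=
  leibnizSubmodule.mem_of_grading span_range_δb (qBracketₗ_H_δb k)
    (by simpa only [qBracketₗ_δb] using qBracketₗ_H_qBra k)

variable {k}

theorem F_mem_leibnizSubmodule (hk : ∀ a b c, k a b c = k b a c) :
    δb .F ∈ leibnizSubmodule (qBracketₗ k) := by
  have hD := D_mem_leibnizSubmodule k
  have hH := H_mem_leibnizSubmodule k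
  refine leibnizSubmodule.mem_of_span_eq_top_of_skew span_range_δb (qBracketₗ_skew k)
    fun b b' ↦ ?_
  cases b using QBasis.cases_zero_succ <;> cases b' using QBasis.cases_zero_succ
  case P_succ.P_succ a b => simp [qBra, hk a b]
  all_goals simp [hD, hH, qBra, (Fin.succ_pos _).ne, apply_ite (qBracketₗ k _), smul_smul]

theorem P_zero_mem_leibnizSubmodule (hk : ∀ a b c, k a b c = k b a c) :
    δb (.P 0) ∈ leibnizSubmodule (qBracketₗ k) := by
  have hD := D_mem_leibnizSubmodule k
  have hH := H_mem_leibnizSubmodule k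
  have hF := F_mem_leibnizSubmodule hk
  refine leibnizSubmodule.mem_of_span_eq_top_of_skew span_range_δb (qBracketₗ_skew k)
    fun b b' ↦ ?_
  cases b using QBasis.cases_zero_succ <;> cases b' using QBasis.cases_zero_succ
  case V.V a b => simp [qBra, hk a b]
  all_goals simp [hD, hH, hF, qBra, (Fin.succ_pos _).ne, apply_ite (qBracketₗ k _)]

theorem V_mem_leibnizSubmodule (hk : ∀ a b c, k a b c = k b a c)
    (hk' : ∀ a b c, k a b c = k a c b) (a : Fin n) :
    δb (.V a) ∈ leibnizSubmodule (qBracketₗ k) := by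
  have hD := D_mem_leibnizSubmodule k
  have hH := H_mem_leibnizSubmodule k
  have hF := F_mem_leibnizSubmodule hk
  have hP₀ := P_zero_mem_leibnizSubmodule hk
  have hk_cyc (b c : Fin n) : k b c a = k a c b := by rw [hk' b c a, hk b a c, hk' a b c]
  have ite_bracket (p : Prop) [Decidable p] (u v : QBasis n → ℝ) :
      qBracketₗ k (if p then u else 0) v = if p then qBracketₗ k u v else 0 := by
    split_ifs <;> simp
  refine leibnizSubmodule.mem_of_span_eq_top_of_skew span_range_δb (qBracketₗ_skew k)
    fun b b' ↦ ?_
  cases b using QBasis.cases_zero_succ <;> cases b' using QBasis.cases_zero_succ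
  case P_succ.P_succ b c => simp [qBra, hk' a b c]
  case V.P_succ b c => simp [qBra, hk_cyc b c]
  case P_succ.V c b => simp [qBra, hk_cyc b c]
  all_goals
    simp [hD, hH, hF, hP₀, qBra, (Fin.succ_pos _).ne, apply_ite (qBracketₗ k _), ite_bracket]

theorem leibnizSubmodule_qBracketₗ_eq_top (hk : ∀ a b c, k a b c = k b a c)
    (hk' : ∀ a b c, k a b c = k a c b) : leibnizSubmodule (qBracketₗ k) = ⊤ := by
  have hD := D_mem_leibnizSubmodule k
  have hH := H_mem_leibnizSubmodule k
  have hF := F_mem_leibnizSubmodule hk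
  have hP₀ := P_zero_mem_leibnizSubmodule hk
  have hV := V_mem_leibnizSubmodule hk hk'
  have hP (a : Fin n) : δb (.P a.succ) ∈ leibnizSubmodule (qBracketₗ k) := by
    simpa [qBra] using leibnizSubmodule.apply_mem hP₀ (hV a)
  rw [eq_top_iff, ← span_range_δb, Submodule.span_le]
  rintro _ ⟨b, rfl⟩
  cases b with
  | D => exact hD
  | P i => exact Fin.cases hP₀ hP i
  | V a => exact hV a
  | F => exact hF
  | H => exact hH
  | X _ | Z =>
    refine leibnizSubmodule.mem_of_span_eq_top_of_skew span_range_δb (qBracketₗ_skew k)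
      fun b b' ↦ ?_
    cases b using QBasis.cases_zero_succ <;> cases b' using QBasis.cases_zero_succ <;>
      simp [hD, hH, hF, hP₀, hP, hV, qBra]

end KillingAlgebra

/-- the displayed bracket relations define a skew-symmetric
bracket satisfying the Jacobi identity, i.e. a Lie algebra structure, on the
`(3n+6)`-dimensional space. -/
theorem stmt_4 {n : ℕ} (k : Fin n → Fin n → Fin n → ℝ)
    (hsymm : ∀ a b c, k a b c = k b a c ∧ k a b c = k a c b) :
    (∀ x y : QBasis n → ℝ, qBracket k x y = -qBracket k y x) ∧
    (∀ x y z : QBasis n → ℝ,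
      qBracket k x (qBracket k y z) + qBracket k y (qBracket k z x) +
        qBracket k z (qBracket k x y) = 0) ∧
    Module.finrank ℝ (QBasis n → ℝ) = 3 * n + 6 := by
  have hk (a b c : Fin n) : k a b c = k b a c := (hsymm a b c).1
  have hk' (a b c : Fin n) : k a b c = k a c b := (hsymm a b c).2
  have mem_leibniz (x : QBasis n → ℝ) : x ∈ leibnizSubmodule (qBracketₗ k) :=
    leibnizSubmodule_qBracketₗ_eq_top hk hk' ▸ Submodule.mem_top
  simp only [← qBracketₗ_apply]
  exact ⟨qBracketₗ_skew k, fun x ↦ leibnizSubmodule.jacobi (qBracketₗ_skew k) (mem_leibniz x),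
    by rw [Module.finrank_fintype_fun_eq_card, card_qBasis]⟩

end
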